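/- Let P, P' ⊂ ℝ^N be two compact convex polytopes (convex hulls of finite sets) whose intersection P ∩ P' is an exposed face of P and an exposed face of P' (possibly empty). Then there exist finite simplicial complexes T and T' in ℝ^N with space T = P and space T' = P' such that the union of the two collections of simplices is again a simplicial complex; equivalently, the intersection of any simplex of T with any simplex of T' is either empty or a common face of both. -/

import Mathlib

open Set Geometry

namespace LexTri

/-- The first nonzero value of `μ` along the list is positive. -/
def LexPos {E : Type*} : List E → (E → ℝ) → Prop
  | [], _ => False
  | a :: L, μ => 0 < μ a ∨ (μ a = 0 ∧ LexPos L μ)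

lemma lexPos_total {E : Type*} (L : List E) (μ : E → ℝ) (h1 : ¬ LexPos L μ)
    (h2 : ¬ LexPos L (fun s => - μ s)) : ∀ a ∈ L, μ a = 0 := by
  induction L with
  | nil => simp
  | cons b L ih =>
    simp only [LexPos, not_or, not_and, not_lt] at h1 h2
    have hb : μ b = 0 := by linarith [h1.1, h2.1]
    intro a ha
    rcases List.mem_cons.1 ha with rfl | ha
    · exact hb
    · exact ih (h1.2 hb) (h2.2 (by simp [hb])) a ha

lemma lexPos_smul {E : Type*} (L : List E) (μ : E → ℝ) (c : ℝ) (hc : 0 < c) (h : LexPos L μ) :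
    LexPos L (fun s => c * μ s) := by
  induction L with
  | nil => exact h
  | cons b L ih =>
    rcases h with h | h
    · exact Or.inl (mul_pos hc h)
    · exact Or.inr ⟨by simp [h.1], ih h.2⟩

lemma exists_lexMax {E : Type*} (L : List E) : ∀ (K : Set (E → ℝ)), IsCompact K → K.Nonempty →
    ∃ x ∈ K, ∀ y ∈ K, ¬ LexPos L (fun s => y s - x s) := by
  induction L with
  | nil => rintro K - ⟨x, hx⟩; exact ⟨x, hx, fun y _ h => h⟩
  | cons b L ih =>
    intro K hK hne
    obtain ⟨z, hz, hmax⟩ := hK.exists_isMaxOn hne (continuous_apply b).continuousOn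
    obtain ⟨x, hx, hx'⟩ := ih (K ∩ {y | y b = z b})
      (hK.inter_right (isClosed_eq (continuous_apply b) continuous_const)) ⟨z, hz, rfl⟩
    refine ⟨x, hx.1, fun y hy h => ?_⟩
    have hxb : x b = z b := hx.2
    rcases h with h | h
    · have : y b ≤ z b := hmax hy
      linarith
    · exact hx' y ⟨hy, by have := h.1; simp only [mem_ofPred_eq]; linarith⟩ h.2

variable {E : Type*} [NormedAddCommGroup E] [NormedSpace ℝ E]

/-- `w` is a system of convex weights on `S` representing `x`. -/
def Rep (S : Finset E) (x : E) (w : E → ℝ) : Prop :=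
  (∀ s, s ∉ S → w s = 0) ∧ (∀ s, 0 ≤ w s) ∧ ∑ s ∈ S, w s = 1 ∧ ∑ s ∈ S, w s • s = x

lemma Rep.change {S B : Finset E} {x : E} {w : E → ℝ} (h : Rep S x w)
    (hB : ∀ s, s ∉ B → w s = 0) : Rep B x w := by
  classical
  obtain ⟨h0, h1, h2, h3⟩ := h
  refine ⟨hB, h1, ?_, ?_⟩
  · rw [← h2, Finset.sum_subset (Finset.subset_union_left (s₁ := B) (s₂ := S)) fun s _ hs => hB s hs,
      Finset.sum_subset (Finset.subset_union_right (s₁ := B) (s₂ := S)) fun s _ hs => h0 s hs]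
  · rw [← h3, Finset.sum_subset (Finset.subset_union_left (s₁ := B) (s₂ := S))
        fun s _ hs => by rw [hB s hs, zero_smul],
      Finset.sum_subset (Finset.subset_union_right (s₁ := B) (s₂ := S))
        fun s _ hs => by rw [h0 s hs, zero_smul]]

lemma Rep.mono {S B : Finset E} {x : E} {w : E → ℝ} (h : Rep S x w) (hB : S ⊆ B) : Rep B x w :=
  h.change fun s hs => h.1 s fun h => hs (hB h)

lemma mem_hull_iff {S : Finset E} {x : E} :
    x ∈ convexHull ℝ (S : Set E) ↔ ∃ w, Rep S x w := by
  classical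
  rw [Finset.mem_convexHull']
  constructor
  · rintro ⟨w, h1, h2, h3⟩
    refine ⟨fun s => if s ∈ S then w s else 0, fun s hs => by simp [hs], fun s => ?_, ?_, ?_⟩
    · by_cases hs : s ∈ S
      · simpa [hs] using h1 s hs
      · simp [hs]
    · rw [← h2]; exact Finset.sum_congr rfl fun s hs => by simp [hs]
    · rw [← h3]; exact Finset.sum_congr rfl fun s hs => by simp [hs]
  · rintro ⟨w, -, h1, h2, h3⟩
    exact ⟨w, fun s _ => h1 s, h2, h3⟩

lemma isCompact_rep (S : Finset E) (x : E) : IsCompact {w | Rep S x w} := by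
  have hK : IsCompact (Set.pi univ (fun _ : E => Icc (0 : ℝ) 1)) :=
    isCompact_univ_pi fun _ => isCompact_Icc
  refine hK.of_isClosed_subset ?_ ?_
  · have : {w | Rep S x w} = (⋂ s, ⋂ (_ : s ∉ S), {w : E → ℝ | w s = 0}) ∩
        ((⋂ s, {w : E → ℝ | 0 ≤ w s}) ∩ ({w : E → ℝ | ∑ s ∈ S, w s = 1} ∩
          {w : E → ℝ | ∑ s ∈ S, w s • s = x})) := by
      ext w; simp [Rep]
    rw [this]
    refine IsClosed.inter ?_ (IsClosed.inter ?_ (IsClosed.inter ?_ ?_))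
    · exact isClosed_iInter fun s => isClosed_iInter fun _ =>
        isClosed_eq (continuous_apply s) continuous_const
    · exact isClosed_iInter fun s => isClosed_le continuous_const (continuous_apply s)
    · exact isClosed_eq (by fun_prop) continuous_const
    · exact isClosed_eq (by fun_prop) continuous_const
  · rintro w ⟨h0, h1, h2, -⟩ s -
    refine ⟨h1 s, ?_⟩
    by_cases hs : s ∈ S
    · rw [← h2]; exact Finset.single_le_sum (fun i _ => h1 i) hs
    · rw [h0 s hs]; exact zero_le_one

/-- `A` supports only lexicographically maximal weights on `S`. -/
def Good (L : List E) (S A : Finset E) : Prop :=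
  A ⊆ S ∧ ∀ μ : E → ℝ, (∀ s, s ∉ S → μ s = 0) → ∑ s ∈ S, μ s = 0 → ∑ s ∈ S, μ s • s = 0 →
    (∀ s, s ∉ A → 0 ≤ μ s) → ¬ LexPos L μ

lemma Good.mono {L : List E} {S A B : Finset E} (h : Good L S A) (hB : B ⊆ A) : Good L S B :=
  ⟨hB.trans h.1, fun μ h0 h1 h2 h3 => h.2 μ h0 h1 h2 fun s hs => h3 s fun h => hs (hB h)⟩

lemma Good.indep {L : List E} {S A : Finset E} (hL : ∀ s ∈ S, s ∈ L) (h : Good L S A) :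
    AffineIndependent ℝ ((↑) : A → E) := by
  classical
  rw [affineIndependent_iff_of_fintype]
  intro w hw0 hw1
  rw [Finset.weightedVSub_eq_linear_combination _ hw0] at hw1
  let μ : E → ℝ := fun s => if hs : s ∈ A then w ⟨s, hs⟩ else 0
  have hμ : ∀ s, s ∉ A → μ s = 0 := fun s hs => by simp [μ, hs]
  have hμS : ∀ s, s ∉ S → μ s = 0 := fun s hs => hμ s fun h' => hs (h.1 h')
  have h1 : ∑ s ∈ S, μ s = 0 := by
    rw [← Finset.sum_subset h.1 fun s _ hs => hμ s hs, ← Finset.sum_coe_sort, ← hw0]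
    exact Finset.sum_congr rfl fun s _ => by simp [μ]
  have h2 : ∑ s ∈ S, μ s • s = 0 := by
    rw [← Finset.sum_subset h.1 fun s _ hs => by rw [hμ s hs, zero_smul],
      ← Finset.sum_coe_sort, ← hw1]
    exact Finset.sum_congr rfl fun s _ => by simp [μ]
  have := lexPos_total L μ (h.2 μ hμS h1 h2 fun s hs => (hμ s hs).ge)
    (h.2 _ (fun s hs => by simp [hμS s hs]) (by simp [h1]) (by simp [h2])
      fun s hs => by simp [hμ s hs])
  intro i
  have h' := this i (hL _ (h.1 i.2))
  simpa [μ] using h'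

lemma Good.max {L : List E} {S A : Finset E} (h : Good L S A) {x : E} {w w' : E → ℝ}
    (hw : Rep A x w) (hw' : Rep S x w') : ¬ LexPos L (fun s => w' s - w s) := by
  have hwS := hw.mono h.1
  refine h.2 _ (fun s hs => ?_) ?_ ?_ (fun s hs => ?_)
  · simp [hw'.1 s hs, hwS.1 s hs]
  · rw [Finset.sum_sub_distrib, hw'.2.2.1, hwS.2.2.1, sub_self]
  · simp_rw [sub_smul]
    rw [Finset.sum_sub_distrib, hw'.2.2.2, hwS.2.2.2, sub_self]
  · rw [hw.1 s hs, sub_zero]; exact hw'.2.1 s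

lemma exists_good (L : List E) {S : Finset E} {x : E} (hx : x ∈ convexHull ℝ (S : Set E)) :
    ∃ A, Good L S A ∧ x ∈ convexHull ℝ (A : Set E) := by
  classical
  obtain ⟨w, hw, hmax⟩ := exists_lexMax L {w | Rep S x w} (isCompact_rep S x) (mem_hull_iff.1 hx)
  have hw : Rep S x w := hw
  have hA : ∀ s, s ∉ S.filter (fun s => 0 < w s) → w s = 0 := by
    intro s hs
    by_cases hsS : s ∈ S
    · simp only [Finset.mem_filter, hsS, true_and, not_lt] at hs
      exact le_antisymm hs (hw.2.1 s)
    · exact hw.1 s hsS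
  refine ⟨S.filter (fun s => 0 < w s), ⟨Finset.filter_subset _ _, ?_⟩,
    mem_hull_iff.2 ⟨w, hw.change hA⟩⟩
  intro μ h0 h1 h2 h3 hlex
  have hev : ∀ᶠ ε in nhdsWithin (0 : ℝ) (Ioi 0), ∀ s ∈ S.filter (fun s => 0 < w s),
      0 < w s + ε * μ s := by
    rw [Filter.eventually_all_finset]
    intro s hs
    have hc : Continuous fun ε : ℝ => w s + ε * μ s := by fun_prop
    refine Filter.Eventually.filter_mono nhdsWithin_le_nhds ?_
    refine hc.continuousAt.eventually (lt_mem_nhds ?_)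
    simpa using (Finset.mem_filter.1 hs).2
  obtain ⟨ε, hε, hpos⟩ := (hev.and self_mem_nhdsWithin).exists
  have hpos : 0 < ε := hpos
  refine hmax (fun s => w s + ε * μ s) ⟨fun s hs => ?_, fun s => ?_, ?_, ?_⟩ ?_
  · simp [hw.1 s hs, h0 s hs]
  · by_cases hs : s ∈ S.filter (fun s => 0 < w s)
    · exact (hε s hs).le
    · exact add_nonneg (hw.2.1 s) (mul_nonneg hpos.le (h3 s hs))
  · rw [Finset.sum_add_distrib, ← Finset.mul_sum, h1, hw.2.2.1]; simp
  · simp_rw [add_smul, mul_smul]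
    rw [Finset.sum_add_distrib, ← Finset.smul_sum, h2, hw.2.2.2]; simp
  · simpa using lexPos_smul L μ ε hpos hlex

lemma good_inter {L : List E} {S S' A B : Finset E} (hL : ∀ s ∈ S, s ∈ L)
    (hc : ∀ x ∈ convexHull ℝ (S : Set E) ∩ convexHull ℝ (S' : Set E), ∀ w, Rep S x w → Rep S' x w)
    (hc' : ∀ x ∈ convexHull ℝ (S : Set E) ∩ convexHull ℝ (S' : Set E), ∀ w, Rep S' x w → Rep S x w)
    (hA : Good L S A) (hB : Good L S' B) :
    convexHull ℝ (A : Set E) ∩ convexHull ℝ (B : Set E) ⊆ convexHull ℝ (A ∩ B : Set E) := by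
  classical
  rintro x ⟨hxA, hxB⟩
  have hx : x ∈ convexHull ℝ (S : Set E) ∩ convexHull ℝ (S' : Set E) :=
    ⟨convexHull_mono (by exact_mod_cast hA.1) hxA, convexHull_mono (by exact_mod_cast hB.1) hxB⟩
  obtain ⟨w, hw⟩ := mem_hull_iff.1 hxA
  obtain ⟨v, hv⟩ := mem_hull_iff.1 hxB
  have e1 := hA.max hw (hc' x hx v (hv.mono hB.1))
  have e2 := hB.max hv (hc x hx w (hw.mono hA.1))
  have e := lexPos_total L _ e1 (by simpa using e2)
  rw [← Finset.coe_inter, mem_hull_iff]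
  refine ⟨w, hw.change fun s hs => ?_⟩
  by_cases hsA : s ∈ A
  · have hsB : s ∉ B := fun h => hs (Finset.mem_inter.2 ⟨hsA, h⟩)
    have := e s (hL s (hA.1 hsA))
    rw [hv.1 s hsB] at this
    linarith
  · exact hw.1 s hsA

/-- The lexicographic triangulation. -/
def tri (L : List E) (S : Finset E) (hL : ∀ s ∈ S, s ∈ L) : SimplicialComplex ℝ E where
  faces := {A | A.Nonempty ∧ Good L S A}
  isRelLowerSet_faces := fun _ hA => ⟨hA.1, fun _ hB hne => ⟨hne, hA.2.mono hB⟩⟩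
  indep := fun hA => hA.2.indep hL
  inter_subset_convexHull := fun hA hB =>
    good_inter hL (fun _ _ _ h => h) (fun _ _ _ h => h) hA.2 hB.2

lemma tri_finite (L : List E) (S : Finset E) (hL : ∀ s ∈ S, s ∈ L) :
    (tri L S hL).faces.Finite :=
  (S.powerset.finite_toSet).subset fun _ hA => Finset.mem_coe.2 (Finset.mem_powerset.2 hA.2.1)

lemma tri_space (L : List E) (S : Finset E) (hL : ∀ s ∈ S, s ∈ L) :
    (tri L S hL).space = convexHull ℝ (S : Set E) := by
  ext x
  rw [SimplicialComplex.mem_space_iff]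
  constructor
  · rintro ⟨A, hA, hx⟩
    exact convexHull_mono (by exact_mod_cast hA.2.1) hx
  · intro hx
    obtain ⟨A, hA, hxA⟩ := exists_good L hx
    refine ⟨A, ⟨?_, hA⟩, hxA⟩
    have : (convexHull ℝ (A : Set E)).Nonempty := ⟨x, hxA⟩
    simpa using this

lemma supp_face {S : Finset E} {F : Set E} (hF : IsExposed ℝ (convexHull ℝ (S : Set E)) F)
    {x : E} (hx : x ∈ F) {w : E → ℝ} (hw : Rep S x w) : ∀ s, s ∉ F → w s = 0 := by
  obtain ⟨l, hl⟩ := hF ⟨x, hx⟩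
  rw [hl] at hx ⊢
  intro s hs
  by_cases hsS : s ∈ S
  swap
  · exact hw.1 s hsS
  have hS : ∀ t ∈ S, t ∈ convexHull ℝ (S : Set E) := fun t ht => subset_convexHull ℝ _ ht
  have hsum : ∑ t ∈ S, w t * (l x - l t) = 0 := by
    simp_rw [mul_sub]
    rw [Finset.sum_sub_distrib, ← Finset.sum_mul, hw.2.2.1, one_mul]
    conv_lhs => rw [← hw.2.2.2]
    simp [map_sum]
  rw [Finset.sum_eq_zero_iff_of_nonneg fun t ht =>
    mul_nonneg (hw.2.1 t) (sub_nonneg.2 (hx.2 t (hS t ht)))] at hsum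
  rcases mul_eq_zero.1 (hsum s hsS) with h | h
  · exact h
  · refine absurd ⟨hS s hsS, fun y hy => ?_⟩ hs
    have := hx.2 y hy
    linarith

lemma hull_enlarge [DecidableEq E] {S S' : Finset E} {F : Set E} [DecidablePred (· ∈ F)]
    (hF : F ⊆ convexHull ℝ (S : Set E)) :
    convexHull ℝ ((S ∪ S'.filter (· ∈ F) : Finset E) : Set E) = convexHull ℝ (S : Set E) := by
  refine (convexHull_min ?_ (convex_convexHull ℝ _)).antisymm (convexHull_mono (by simp))
  intro s hs
  simp only [Finset.coe_union, Finset.coe_filter, mem_union, mem_ofPred_eq] at hs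
  rcases hs with hs | hs
  · exact subset_convexHull ℝ _ hs
  · exact hF hs.2

end LexTri

/-- If two compact convex polytopes `P = conv S` and `P' = conv S'` in `ℝ^N` intersect in a
common exposed face (possibly empty), then they admit finite triangulations `T`, `T'` whose
union is again a simplicial complex. -/
theorem statement6 (N : ℕ) (S S' : Finset (EuclideanSpace ℝ (Fin N)))
    (hP : IsExposed ℝ (convexHull ℝ (S : Set (EuclideanSpace ℝ (Fin N))))
      (convexHull ℝ (S : Set (EuclideanSpace ℝ (Fin N))) ∩
        convexHull ℝ (S' : Set (EuclideanSpace ℝ (Fin N)))))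
    (hP' : IsExposed ℝ (convexHull ℝ (S' : Set (EuclideanSpace ℝ (Fin N))))
      (convexHull ℝ (S : Set (EuclideanSpace ℝ (Fin N))) ∩
        convexHull ℝ (S' : Set (EuclideanSpace ℝ (Fin N))))) :
    ∃ T T' : SimplicialComplex ℝ (EuclideanSpace ℝ (Fin N)),
      T.faces.Finite ∧ T'.faces.Finite ∧
      T.space = convexHull ℝ (S : Set (EuclideanSpace ℝ (Fin N))) ∧
      T'.space = convexHull ℝ (S' : Set (EuclideanSpace ℝ (Fin N))) ∧
      ∃ U : SimplicialComplex ℝ (EuclideanSpace ℝ (Fin N)),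
        U.faces = T.faces ∪ T'.faces := by
  classical
  set F := convexHull ℝ (S : Set (EuclideanSpace ℝ (Fin N))) ∩
        convexHull ℝ (S' : Set (EuclideanSpace ℝ (Fin N))) with hFdef
  have e1 := LexTri.hull_enlarge (S := S) (S' := S') (F := F) inter_subset_left
  have e2 := LexTri.hull_enlarge (S := S') (S' := S) (F := F) inter_subset_right
  set S1 := S ∪ S'.filter (· ∈ F) with hS1
  set S2 := S' ∪ S.filter (· ∈ F) with hS2
  have hL1 : ∀ s ∈ S1, s ∈ (S1 ∪ S2).toList := fun s hs => by
    rw [Finset.mem_toList]; exact Finset.mem_union_left _ hs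
  have hL2 : ∀ s ∈ S2, s ∈ (S1 ∪ S2).toList := fun s hs => by
    rw [Finset.mem_toList]; exact Finset.mem_union_right _ hs
  have c1 : ∀ x ∈ convexHull ℝ (S1 : Set (EuclideanSpace ℝ (Fin N))) ∩
      convexHull ℝ (S2 : Set (EuclideanSpace ℝ (Fin N))), ∀ w,
      LexTri.Rep S1 x w → LexTri.Rep S2 x w := by
    intro x hx w hw
    rw [e1, e2] at hx
    have hs := LexTri.supp_face (S := S1) (F := F) (by rw [e1]; exact hP) hx hw
    refine hw.change fun s hs2 => ?_
    by_cases hsF : s ∈ F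
    · refine hw.1 s fun hs1 => hs2 ?_
      simp only [hS1, hS2, Finset.mem_union, Finset.mem_filter] at hs1 ⊢
      tauto
    · exact hs s hsF
  have c2 : ∀ x ∈ convexHull ℝ (S1 : Set (EuclideanSpace ℝ (Fin N))) ∩
      convexHull ℝ (S2 : Set (EuclideanSpace ℝ (Fin N))), ∀ w,
      LexTri.Rep S2 x w → LexTri.Rep S1 x w := by
    intro x hx w hw
    rw [e1, e2] at hx
    have hs := LexTri.supp_face (S := S2) (F := F) (by rw [e2]; exact hP') hx hw
    refine hw.change fun s hs2 => ?_
    by_cases hsF : s ∈ F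
    · refine hw.1 s fun hs1 => hs2 ?_
      simp only [hS1, hS2, Finset.mem_union, Finset.mem_filter] at hs1 ⊢
      tauto
    · exact hs s hsF
  let T := LexTri.tri _ S1 hL1
  let T' := LexTri.tri _ S2 hL2
  refine ⟨T, T', LexTri.tri_finite _ _ _, LexTri.tri_finite _ _ _,
    (LexTri.tri_space _ _ _).trans e1, (LexTri.tri_space _ _ _).trans e2, ?_⟩
  refine ⟨{ faces := T.faces ∪ T'.faces
            isRelLowerSet_faces := T.isRelLowerSet_faces.union T'.isRelLowerSet_faces
            indep := fun h => h.elim T.indep T'.indep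
            inter_subset_convexHull := ?_ }, rfl⟩
  rintro A B (hA | hA) (hB | hB)
  · exact T.inter_subset_convexHull hA hB
  · exact LexTri.good_inter hL1 c1 c2 hA.2 hB.2
  · rw [inter_comm, inter_comm (A : Set (EuclideanSpace ℝ (Fin N)))]
    exact LexTri.good_inter hL1 c1 c2 hB.2 hA.2
  · exact T'.inter_subset_convexHull hA hB
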